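/- arXiv:2405.19071 — 2 statements merged into one kernel-verified Lean document; each statement's English description precedes it below -/
import Mathlib

section
/- For online bin stretching with m = 3 bins, every behavioral randomized online algorithm A satisfies sup over all instances I of E(I,A) ≥ 19/16; in other words, no randomized online algorithm has stretching factor strictly less than 19/16. -/
/-!
Since the lists `a₁, …, aᵢ` met along an instance are distinct, a behavioral algorithm performs on
every single instance like a random deterministic algorithm whose decisions on all lists are drawn
independently in advance (Kuhn). Hence a lower bound for the mean payoff of every deterministic
algorithm under one fixed distribution of instances is a lower bound for every behavioral algorithm
(Yao).

The hard distribution, with sizes multiplied by `4`, continues the prefix `1, 1, 1` by `4, 4` with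
probability `1/2`, by `3, 3, 3` with probability `1/4` and by `2, 3, 4` with probability `1/4`. A
deterministic algorithm has to place the prefix without knowing the continuation. If the prefix
occupies one, two or three bins, then the maximal loads on the three instances are at least
`4, 6, 5`, at least `5, 5, 4`, or at least `5, 4, 5`, respectively, and the mean is `19/4` in each
case.
-/

open scoped BigOperators

namespace BinStretch

def Fits (m : ℕ) (I : List ℝ) : Prop :=
  ∃ σ : Fin I.length → Fin m,
    ∀ b : Fin m, ∑ i ∈ Finset.univ.filter fun i => σ i = b, I.get i ≤ 1

def IsInstance (m : ℕ) (I : List ℝ) : Prop :=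
  (∀ a ∈ I, 0 < a ∧ a ≤ 1) ∧ Fits m I

noncomputable def payoff (m : ℕ) (I : List ℝ) (D : Fin I.length → Fin m) : ℝ :=
  ⨆ b : Fin m, ∑ i ∈ Finset.univ.filter fun i => D i = b, I.get i

noncomputable def prob {m : ℕ} (A : List ℝ → PMF (Fin m)) (I : List ℝ)
    (D : Fin I.length → Fin m) : ℝ :=
  ∏ i : Fin I.length, ((A (I.take (i.1 + 1))) (D i)).toReal

noncomputable def expPayoff (m : ℕ) (A : List ℝ → PMF (Fin m)) (I : List ℝ) : ℝ :=
  ∑ D : Fin I.length → Fin m, prob A I D * payoff m I D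

def detRun {m : ℕ} (A : List ℝ → Fin m) (I : List ℝ) : Fin I.length → Fin m :=
  fun i => A (I.take (i.1 + 1))

end BinStretch

namespace BinStretch

open MeasureTheory

section Kuhn

variable {m : ℕ} (A : List ℝ → PMF (Fin m))

/-- The mixed strategy induced by a behavioral algorithm: a random deterministic algorithm whose
decisions on different lists are independent, the one on `l` having distribution `A l`. -/
noncomputable def mixedStrategy : Measure (List ℝ → Fin m) :=
  Measure.infinitePi fun l => (A l).toMeasure

instance : IsProbabilityMeasure (mixedStrategy A) := by
  unfold mixedStrategy; infer_instance

lemma take_succ_injective {α : Type*} (I : List α) :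
    Function.Injective fun i : Fin I.length => I.take (i.1 + 1) := by
  intro i j hij
  have hlen := congrArg List.length hij
  simp only [List.length_take] at hlen
  omega

lemma measurable_detRun (I : List ℝ) :
    Measurable fun f : List ℝ → Fin m => detRun f I :=
  measurable_pi_lambda _ fun _ => measurable_pi_apply _

lemma map_detRun_mixedStrategy (I : List ℝ) :
    (mixedStrategy A).map (fun f => detRun f I) =
      Measure.pi fun i : Fin I.length => (A (I.take (i.1 + 1))).toMeasure := by
  rw [← Measure.infinitePi_eq_pi]
  exact Measure.map_infinitePi_infinitePi_of_inj (take_succ_injective I)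

lemma real_pi_singleton_eq_prob (I : List ℝ) (D : Fin I.length → Fin m) :
    (Measure.pi fun i : Fin I.length => (A (I.take (i.1 + 1))).toMeasure).real {D} =
      prob A I D := by
  simp only [Measure.real, Measure.pi_singleton, prob, ENNReal.toReal_prod,
    PMF.toMeasure_apply_singleton _ _ (measurableSet_singleton _)]

lemma integrable_payoff_detRun (I : List ℝ) :
    Integrable (fun f => payoff m I (detRun f I)) (mixedStrategy A) :=
  Integrable.comp_measurable (g := payoff m I) .of_finite (measurable_detRun I)

/-- Kuhn's theorem. -/
theorem expPayoff_eq_integral_mixedStrategy (I : List ℝ) :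
    expPayoff m A I = ∫ f, payoff m I (detRun f I) ∂mixedStrategy A := by
  rw [← integral_map (φ := fun f => detRun f I) (f := payoff m I)
    (measurable_detRun I).aemeasurable (by fun_prop),
    map_detRun_mixedStrategy, integral_fintype .of_finite]
  simp only [real_pi_singleton_eq_prob, smul_eq_mul, expPayoff]

end Kuhn

section Yao

variable {m : ℕ}

lemma payoff_le {I : List ℝ} (hI : IsInstance m I) (D : Fin I.length → Fin m) :
    payoff m I D ≤ m := by
  obtain ⟨hpos, σ, hσ⟩ := hI
  refine Real.iSup_le (fun b => ?_) (Nat.cast_nonneg m)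
  calc ∑ i with D i = b, I.get i
      ≤ ∑ i, I.get i :=
        Finset.sum_le_sum_of_subset_of_nonneg (Finset.filter_subset _ _)
          fun i _ _ => (hpos _ (I.get_mem i)).1.le
    _ = ∑ c : Fin m, ∑ i with σ i = c, I.get i := (Finset.sum_fiberwise _ _ _).symm
    _ ≤ ∑ _c : Fin m, (1 : ℝ) := Finset.sum_le_sum fun c _ => hσ c
    _ = m := by simp

lemma expPayoff_le (A : List ℝ → PMF (Fin m)) {I : List ℝ} (hI : IsInstance m I) :
    expPayoff m A I ≤ m := by
  rw [expPayoff_eq_integral_mixedStrategy]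
  calc ∫ f, payoff m I (detRun f I) ∂mixedStrategy A
      ≤ ∫ _f, (m : ℝ) ∂mixedStrategy A :=
        integral_mono (integrable_payoff_detRun A I) (integrable_const _) fun f => payoff_le hI _
    _ = m := by simp

-- Without this the supremum in the theorem could be `0`, the value of `⨆` on unbounded families.
lemma bddAbove_range_expPayoff (A : List ℝ → PMF (Fin m)) :
    BddAbove (Set.range fun I : {I : List ℝ // IsInstance m I} => expPayoff m A I.1) :=
  ⟨m, Set.forall_mem_range.2 fun I => expPayoff_le A I.2⟩

/-- Yao's principle. -/
theorem le_iSup_expPayoff_of_forall_detRun {ι : Type*} [Fintype ι] {q : ι → ℝ}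
    (hq : q ∈ stdSimplex ℝ ι) {I : ι → List ℝ} (hI : ∀ j, IsInstance m (I j)) {c : ℝ}
    (hc : ∀ f : List ℝ → Fin m, c ≤ ∑ j, q j * payoff m (I j) (detRun f (I j)))
    (A : List ℝ → PMF (Fin m)) :
    c ≤ ⨆ I : {I : List ℝ // IsInstance m I}, expPayoff m A I.1 := by
  have hint (j : ι) :
      Integrable (fun f => q j * payoff m (I j) (detRun f (I j))) (mixedStrategy A) :=
    (integrable_payoff_detRun A (I j)).const_mul _
  calc c = ∫ _f, c ∂mixedStrategy A := by simp
    _ ≤ ∫ f, ∑ j, q j * payoff m (I j) (detRun f (I j)) ∂mixedStrategy A :=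
        integral_mono (integrable_const c) (integrable_finsetSum _ fun j _ => hint j) hc
    _ = ∑ j, q j * expPayoff m A (I j) := by
        simp only [integral_finsetSum _ fun j _ => hint j, integral_const_mul,
          expPayoff_eq_integral_mixedStrategy]
    _ ≤ ∑ j, q j * ⨆ I : {I : List ℝ // IsInstance m I}, expPayoff m A I.1 :=
        Finset.sum_le_sum fun j _ => mul_le_mul_of_nonneg_left
          (le_ciSup (bddAbove_range_expPayoff A) ⟨I j, hI j⟩) (hq.1 j)
    _ = ⨆ I : {I : List ℝ // IsInstance m I}, expPayoff m A I.1 := by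
        rw [← Finset.sum_mul, hq.2, one_mul]

end Yao

section Scaled

variable {m q : ℕ} {w : List ℕ}

/-- The list of item sizes `k / q` for natural numbers `k`. Integral sizes make statements about
bin loads decidable. -/
noncomputable def scaled (q : ℕ) (w : List ℕ) : List ℝ := w.map fun k : ℕ => (k : ℝ) / q

lemma length_scaled : (scaled q w).length = w.length := List.length_map _

lemma scaled_get (i : Fin (scaled q w).length) :
    (scaled q w).get i = (w.get (i.cast length_scaled) : ℝ) / q :=
  List.getElem_map _

lemma take_scaled (n : ℕ) : (scaled q w).take n = scaled q (w.take n) :=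
  List.map_take.symm

/-- The load of bin `b`, in units of `1 / q`, when the items `scaled q w` are placed by `D`. -/
def load (w : List ℕ) (D : Fin w.length → Fin m) (b : Fin m) : ℕ :=
  ∑ i with D i = b, w.get i

lemma sum_scaled_get (D : Fin w.length → Fin m) (b : Fin m) :
    ∑ i with D (i.cast length_scaled) = b, (scaled q w).get i = (load w D b : ℝ) / q := by
  rw [load, Nat.cast_sum, Finset.sum_div]
  exact Finset.sum_equiv (finCongr length_scaled) (by simp) fun i _ => scaled_get i

lemma isInstance_scaled (hw : ∀ k ∈ w, 0 < k ∧ k ≤ q)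
    (hfit : ∃ σ : Fin w.length → Fin m, ∀ b, load w σ b ≤ q) : IsInstance m (scaled q w) := by
  refine ⟨fun a ha => ?_, ?_⟩
  · obtain ⟨k, hk, rfl⟩ := List.mem_map.1 ha
    have hkpos : (0 : ℝ) < k := Nat.cast_pos.2 (hw k hk).1
    have hkq : (k : ℝ) ≤ q := Nat.cast_le.2 (hw k hk).2
    exact ⟨div_pos hkpos (hkpos.trans_le hkq), div_le_one_of_le₀ hkq q.cast_nonneg⟩
  · obtain ⟨σ, hσ⟩ := hfit
    refine ⟨fun i => σ (i.cast length_scaled), fun b => ?_⟩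
    rw [sum_scaled_get]
    exact div_le_one_of_le₀ (Nat.cast_le.2 (hσ b)) q.cast_nonneg

lemma load_div_le_payoff_scaled (D : Fin w.length → Fin m) (b : Fin m) :
    (load w D b : ℝ) / q ≤ payoff m (scaled q w) fun i => D (i.cast length_scaled) := by
  rw [← sum_scaled_get]
  exact le_ciSup (f := fun b => ∑ i with D (i.cast length_scaled) = b, (scaled q w).get i)
    (Set.finite_range _).bddAbove b

/-- The decisions of `f` on `scaled q w`, indexed by the positions of `w`; `detRun` indexes them by
those of `scaled q w`. -/
noncomputable def scaledRun (f : List ℝ → Fin m) (q : ℕ) (w : List ℕ) : Fin w.length → Fin m :=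
  fun i => f (scaled q (w.take (i.1 + 1)))

lemma detRun_scaled (f : List ℝ → Fin m) :
    detRun f (scaled q w) = fun i => scaledRun f q w (i.cast length_scaled) := by
  funext i
  rw [detRun, take_scaled]
  rfl

lemma scaledRun_comp_castLE (f : List ℝ → Fin m) {u : List ℕ} (hu : u <+: w) :
    scaledRun f q w ∘ Fin.castLE hu.length_le = scaledRun f q u := by
  obtain ⟨v, rfl⟩ := hu
  funext i
  simp only [scaledRun, Function.comp_apply, Fin.val_castLE,
    List.take_append_of_le_length (Nat.succ_le_of_lt i.2)]

lemma div_le_payoff_scaled_of_prefix {u : List ℕ} (hu : u <+: w) {φ : (Fin u.length → Fin m) → ℕ}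
    (hφ : ∀ D : Fin w.length → Fin m, ∃ b, φ (D ∘ Fin.castLE hu.length_le) ≤ load w D b)
    (f : List ℝ → Fin m) :
    (φ (scaledRun f q u) : ℝ) / q ≤ payoff m (scaled q w) (detRun f (scaled q w)) := by
  obtain ⟨b, hb⟩ := hφ (scaledRun f q w)
  rw [scaledRun_comp_castLE f hu] at hb
  rw [detRun_scaled]
  exact (div_le_div_of_nonneg_right (Nat.cast_le.2 hb) q.cast_nonneg).trans
    (load_div_le_payoff_scaled _ b)

end Scaled

section ThreeBins

/-- The sizes, in units of `1 / 4`, of the three instances of the hard distribution. -/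
def hardSizes : Fin 3 → List ℕ := ![[1, 1, 1, 4, 4], [1, 1, 1, 3, 3, 3], [1, 1, 1, 2, 3, 4]]

/-- The probabilities of the three instances of the hard distribution. -/
noncomputable def hardWeights : Fin 3 → ℝ := ![1 / 2, 1 / 4, 1 / 4]

lemma hardWeights_mem_stdSimplex : hardWeights ∈ stdSimplex ℝ (Fin 3) := by
  refine ⟨fun j => ?_, ?_⟩
  · fin_cases j <;> norm_num [hardWeights]
  · norm_num [hardWeights, Fin.sum_univ_succ]

lemma prefix_hardSizes : ∀ j, [1, 1, 1] <+: hardSizes j := by decide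

lemma isInstance_hardSizes (j : Fin 3) : IsInstance 3 (scaled 4 (hardSizes j)) := by
  refine isInstance_scaled (by decide +revert) ?_
  fin_cases j
  · exact ⟨(![0, 0, 0, 1, 2] : Fin 5 → Fin 3), by decide +kernel⟩
  · exact ⟨(![0, 1, 2, 0, 1, 2] : Fin 6 → Fin 3), by decide +kernel⟩
  · exact ⟨(![2, 2, 1, 2, 1, 0] : Fin 6 → Fin 3), by decide +kernel⟩

/-- The maximal load forced on each of the instances `hardSizes` when the prefix `1, 1, 1` is placed
by `d`, in units of `1 / 4`. Let `k` be the number of bins that `d` uses.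
* For `4, 4`: if `k ≥ 2`, then at most one bin is empty, so one of these items shares its bin.
* For `3, 3, 3`: either two of these items share a bin, which gives `6`, or one of them joins the
  fullest bin of the prefix, which has load `4 - k`.
* For `2, 3, 4`: if `k = 1`, then either one of these items joins the bin of load `3`, or the other
  two bins share a load of `9`; if `k = 3`, then the item `4` joins an occupied bin. -/
def forcedLoad (d : Fin 3 → Fin 3) : Fin 3 → ℕ :=
  let k := (Finset.univ.image d).card
  ![if k = 1 then 4 else 5, 7 - k, if k = 2 then 4 else 5]

lemma exists_forcedLoad_le_load (j : Fin 3) (D : Fin (hardSizes j).length → Fin 3) :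
    ∃ b, forcedLoad (D ∘ Fin.castLE (prefix_hardSizes j).length_le) j ≤ load (hardSizes j) D b := by
  revert D
  fin_cases j <;> decide +kernel

lemma two_mul_forcedLoad_add_add :
    ∀ d, 2 * forcedLoad d 0 + forcedLoad d 1 + forcedLoad d 2 = 19 := by
  decide

lemma sum_hardWeights_mul_forcedLoad (d : Fin 3 → Fin 3) :
    ∑ j, hardWeights j * ((forcedLoad d j : ℝ) / 4) = 19 / 16 := by
  have h : 2 * (forcedLoad d 0 : ℝ) + forcedLoad d 1 + forcedLoad d 2 = 19 :=
    mod_cast two_mul_forcedLoad_add_add d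
  calc ∑ j, hardWeights j * ((forcedLoad d j : ℝ) / 4)
      = (2 * (forcedLoad d 0 : ℝ) + forcedLoad d 1 + forcedLoad d 2) / 16 := by
        simp only [Fin.sum_univ_three, hardWeights, Matrix.cons_val]
        ring
    _ = 19 / 16 := by rw [h]

lemma le_sum_hardWeights_mul_payoff (f : List ℝ → Fin 3) :
    19 / 16 ≤ ∑ j, hardWeights j *
      payoff 3 (scaled 4 (hardSizes j)) (detRun f (scaled 4 (hardSizes j))) := by
  rw [← sum_hardWeights_mul_forcedLoad (scaledRun f 4 [1, 1, 1])]
  refine Finset.sum_le_sum fun j _ => mul_le_mul_of_nonneg_left ?_ (hardWeights_mem_stdSimplex.1 j)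
  exact div_le_payoff_scaled_of_prefix (prefix_hardSizes j) (φ := (forcedLoad · j))
    (exists_forcedLoad_le_load j) f

end ThreeBins

end BinStretch

theorem randomized_lower_bound_three_bins (A : List ℝ → PMF (Fin 3)) :
    (19 : ℝ) / 16 ≤ ⨆ I : {I : List ℝ // BinStretch.IsInstance 3 I},
      BinStretch.expPayoff 3 A I.1 :=
  BinStretch.le_iSup_expPayoff_of_forall_detRun BinStretch.hardWeights_mem_stdSimplex
    BinStretch.isInstance_hardSizes BinStretch.le_sum_hardWeights_mul_payoff A
end

section
/- Let m ≥ 1, s ≥ 1 and ε > 0. For each i ∈ {1,…,s} let qᵢ and q'ᵢ be functions assigning to each decision history D ∈ {1,…,m}^{i−1} a probability distribution on {1,…,m}, and suppose that for every i, every history D ∈ {1,…,m}^{i−1} and every decision d ∈ {1,…,m}, |qᵢ(D)(d) − q'ᵢ(D)(d)| ≤ ε/(m²·2^i). Let f : {1,…,m}^s → ℝ satisfy |f(D)| ≤ m for all D. Then |∑_{D ∈ {1,…,m}^s} (∏_{i=1}^s qᵢ(D₁,…,D_{i−1})(Dᵢ))·f(D) − ∑_{D ∈ {1,…,m}^s}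 (∏_{i=1}^s q'ᵢ(D₁,…,D_{i−1})(Dᵢ))·f(D)| ≤ ε. That is, two behavioral decision processes whose step-i decision probabilities differ by at most ε/(m²·2^i) have expected payoffs differing by at most ε for any payoff function bounded by m. -/
/-!
Compare the laws of the two processes in `ℓ¹` distance, peeling off the last decision. With `p`,
`p'` the laws of the history and `k`, `k'` the conditional laws of the last decision,
`p * k - p' * k' = (p - p') * k + p' * (k - k')`. As `k` and `p'` have total mass one, each step
adds to the distance at most the `ℓ¹` distance of its conditional laws, here
`m * (ε / (m² * 2 ^ i))`. Summing the geometric series, the laws are within `ε / m`, and the payoff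
is bounded by `m`.
-/

open scoped BigOperators

noncomputable def seqProb {m s : ℕ}
    (q : ∀ i : Fin s, (Fin i.1 → Fin m) → PMF (Fin m)) (D : Fin s → Fin m) : ℝ :=
  ∏ i : Fin s, ((q i fun j : Fin i.1 => D (Fin.castLE i.2.le j)) (D i)).toReal

section OrderedRing

variable {R α β : Type*} [Ring R] [LinearOrder R] [IsOrderedRing R]

lemma abs_sum_mul_sub_sum_mul_le {s : Finset α} {p p' f : α → R} {C : R}
    (hf : ∀ x ∈ s, |f x| ≤ C) :
    |∑ x ∈ s, p x * f x - ∑ x ∈ s, p' x * f x| ≤ (∑ x ∈ s, |p x - p' x|) * C := by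
  simp_rw [← Finset.sum_sub_distrib, ← sub_mul, Finset.sum_mul]
  refine (Finset.abs_sum_le_sum_abs _ _).trans (Finset.sum_le_sum fun x hx => ?_)
  rw [abs_mul]
  exact mul_le_mul_of_nonneg_left (hf x hx) (abs_nonneg _)

lemma sum_abs_mul_sub_mul_le {t : Finset β} {p p' δ : R} {k k' : β → R}
    (hk : ∑ y ∈ t, |k y| ≤ 1) (hδ : ∑ y ∈ t, |k y - k' y| ≤ δ) :
    ∑ y ∈ t, |p * k y - p' * k' y| ≤ |p - p'| + |p'| * δ :=
  calc ∑ y ∈ t, |p * k y - p' * k' y|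
      = ∑ y ∈ t, |(p - p') * k y + p' * (k y - k' y)| := by
        simp only [sub_mul, mul_sub, sub_add_sub_cancel]
    _ ≤ ∑ y ∈ t, (|p - p'| * |k y| + |p'| * |k y - k' y|) := by
        gcongr with y
        exact (abs_add_le _ _).trans_eq (by rw [abs_mul, abs_mul])
    _ = |p - p'| * ∑ y ∈ t, |k y| + |p'| * ∑ y ∈ t, |k y - k' y| := by
        rw [Finset.sum_add_distrib, Finset.mul_sum, Finset.mul_sum]
    _ ≤ |p - p'| + |p'| * δ :=
        add_le_add (mul_le_of_le_one_right (abs_nonneg _) hk)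
          (mul_le_mul_of_nonneg_left hδ (abs_nonneg _))

end OrderedRing

lemma sum_toReal_pmf {α : Type*} [Fintype α] (p : PMF α) : ∑ a, (p a).toReal = 1 := by
  rw [← ENNReal.toReal_sum fun a _ => p.apply_ne_top a, ← tsum_fintype (L := .unconditional _),
    p.tsum_coe, ENNReal.toReal_one]

lemma sum_pi_fin_succ_eq_sum_snoc {α M : Type*} [Fintype α] [AddCommMonoid M] {s : ℕ}
    (g : (Fin (s + 1) → α) → M) :
    ∑ D, g D = ∑ H : Fin s → α, ∑ d, g (Fin.snoc (α := fun _ => α) H d) := by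
  rw [← (Fin.snocEquiv fun _ => α).sum_comp, Fintype.sum_prod_type_right]
  rfl

section SeqProb

variable {m s : ℕ}

lemma seqProb_nonneg (q : ∀ i : Fin s, (Fin i.1 → Fin m) → PMF (Fin m)) (D : Fin s → Fin m) :
    0 ≤ seqProb q D :=
  Finset.prod_nonneg fun _ _ => ENNReal.toReal_nonneg

lemma seqProb_succ (q : ∀ i : Fin (s + 1), (Fin i.1 → Fin m) → PMF (Fin m))
    (D : Fin (s + 1) → Fin m) :
    seqProb q D =
      seqProb (Fin.init q) (Fin.init D) * (q (Fin.last s) (Fin.init D) (D (Fin.last s))).toReal :=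
  Fin.prod_univ_castSucc _

lemma seqProb_snoc (q : ∀ i : Fin (s + 1), (Fin i.1 → Fin m) → PMF (Fin m)) (H : Fin s → Fin m)
    (d : Fin m) :
    seqProb q (Fin.snoc (α := fun _ => Fin m) H d) =
      seqProb (Fin.init q) H * (q (Fin.last s) H d).toReal := by
  rw [seqProb_succ, Fin.init_snoc, Fin.snoc_last]

lemma sum_seqProb (q : ∀ i : Fin s, (Fin i.1 → Fin m) → PMF (Fin m)) : ∑ D, seqProb q D = 1 := by
  induction s with
  | zero => simp [seqProb]
  | succ s ih =>
    have last_mass (H : Fin s → Fin m) : ∑ d, (q (Fin.last s) H d).toReal = 1 := sum_toReal_pmf _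
    simp_rw [sum_pi_fin_succ_eq_sum_snoc, seqProb_snoc, ← Finset.mul_sum, last_mass, mul_one]
    exact ih _

lemma sum_abs_seqProb_sub_le {q q' : ∀ i : Fin s, (Fin i.1 → Fin m) → PMF (Fin m)} {δ : Fin s → ℝ}
    (h : ∀ i H, ∑ d, |(q i H d).toReal - (q' i H d).toReal| ≤ δ i) :
    ∑ D, |seqProb q D - seqProb q' D| ≤ ∑ i, δ i := by
  induction s with
  | zero => simp [seqProb]
  | succ s ih =>
    have last_mass (H : Fin s → Fin m) : ∑ d, |(q (Fin.last s) H d).toReal| ≤ 1 := by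
      simp only [ENNReal.abs_toReal]
      exact (sum_toReal_pmf _).le
    calc ∑ D, |seqProb q D - seqProb q' D|
        = ∑ H, ∑ d, |seqProb (Fin.init q) H * (q (Fin.last s) H d).toReal -
            seqProb (Fin.init q') H * (q' (Fin.last s) H d).toReal| := by
          simp_rw [sum_pi_fin_succ_eq_sum_snoc, seqProb_snoc]
      _ ≤ ∑ H, (|seqProb (Fin.init q) H - seqProb (Fin.init q') H| +
            |seqProb (Fin.init q') H| * δ (Fin.last s)) :=
          Finset.sum_le_sum fun H _ => sum_abs_mul_sub_mul_le (last_mass H) (h (Fin.last s) H)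
      _ = ∑ H, |seqProb (Fin.init q) H - seqProb (Fin.init q') H| + δ (Fin.last s) := by
          simp_rw [abs_of_nonneg (seqProb_nonneg _ _)]
          rw [Finset.sum_add_distrib, ← Finset.sum_mul, sum_seqProb, one_mul]
      _ ≤ ∑ i, δ i := by
          rw [Fin.sum_univ_castSucc]
          gcongr
          exact ih fun i => h i.castSucc

end SeqProb

lemma sum_div_two_div_two_pow_le {c : ℝ} (hc : 0 ≤ c) (t : Finset ℕ) :
    ∑ i ∈ t, c / 2 / 2 ^ i ≤ c :=
  ((summable_geometric_two' c).sum_le_tsum t fun _ _ => by positivity).trans_eq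
    (tsum_geometric_two' c)

theorem close_behavioral_processes_close_expectations
    (m s : ℕ) (hm : 1 ≤ m) (hs : 1 ≤ s) (ε : ℝ) (hε : 0 < ε)
    (q q' : ∀ i : Fin s, (Fin i.1 → Fin m) → PMF (Fin m))
    (hclose : ∀ i : Fin s, ∀ D : Fin i.1 → Fin m, ∀ d : Fin m,
      |((q i D) d).toReal - ((q' i D) d).toReal| ≤ ε / (m ^ 2 * 2 ^ (i.1 + 1)))
    (f : (Fin s → Fin m) → ℝ) (hf : ∀ D, |f D| ≤ m) :
    |(∑ D : Fin s → Fin m, seqProb q D * f D)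
      - (∑ D : Fin s → Fin m, seqProb q' D * f D)| ≤ ε := by
  have hm0 : (m : ℝ) ≠ 0 := by exact_mod_cast (zero_lt_one.trans_le hm).ne'
  have step_dist (i : Fin s) (H : Fin i.1 → Fin m) :
      ∑ d, |(q i H d).toReal - (q' i H d).toReal| ≤ ε / m / 2 / 2 ^ i.1 :=
    calc ∑ d, |(q i H d).toReal - (q' i H d).toReal|
        ≤ ∑ _d : Fin m, ε / (m ^ 2 * 2 ^ (i.1 + 1)) := Finset.sum_le_sum fun d _ => hclose i H d
      _ = ε / m / 2 / 2 ^ i.1 := by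
        rw [Finset.sum_const, Finset.card_univ, Fintype.card_fin, nsmul_eq_mul]
        field_simp
        ring
  have law_dist : ∑ D, |seqProb q D - seqProb q' D| ≤ ε / m := by
    refine (sum_abs_seqProb_sub_le step_dist).trans ?_
    rw [Fin.sum_univ_eq_sum_range fun i => ε / m / 2 / 2 ^ i]
    exact sum_div_two_div_two_pow_le (by positivity) _
  calc |∑ D, seqProb q D * f D - ∑ D, seqProb q' D * f D|
      ≤ (∑ D, |seqProb q D - seqProb q' D|) * m := abs_sum_mul_sub_sum_mul_le fun D _ => hf D
    _ ≤ ε / m * m := by gcongr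
    _ = ε := div_mul_cancel₀ ε hm0
end
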